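/- arXiv:1511.05321 — 3 statements merged into one kernel-verified Lean document; each statement's English description precedes it below -/
import Mathlib

section
/- Let p, q ∈ ℂ, let μ ∈ ℂ with Re μ > 0, and let n ≥ 0 be an integer. Then ∑_{m∈ℤ} (m+p)ⁿ exp(−(π/μ)(m+p)² + 2πi(m+p)q) = e^{2πipq} · ∑_{j=0}^{⌊n/2⌋} [ (−i)^{n−2j} μ^{n+1/2−j} n! / ( (2π)^j (n−2j)! (2j)!! ) ] · ∑_{m∈ℤ} (m−q)^{n−2j} exp(−πμ(m−q)² + 2πip(m−q)), where all the series converge absolutely. -/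
noncomputable section

/-- The theta function with characteristics `θ[p,q](iμ)`. -/
def theta (p q μ : ℂ) : ℂ :=
  ∑' m : ℤ, Complex.exp (-(Real.pi : ℂ) * ((m : ℂ) + p) ^ 2 * μ +
    2 * (Real.pi : ℂ) * Complex.I * ((m : ℂ) + p) * q)

/-- The characteristic derivative `∂qθ[p,q](iμ)`. -/
def thetaQ (p q μ : ℂ) : ℂ :=
  2 * (Real.pi : ℂ) * Complex.I *
    ∑' m : ℤ, ((m : ℂ) + p) * Complex.exp (-(Real.pi : ℂ) * ((m : ℂ) + p) ^ 2 * μ +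
      2 * (Real.pi : ℂ) * Complex.I * ((m : ℂ) + p) * q)

/-- The n-th μ-derivative `∂μⁿθ[p,q](iμ)`, given by its absolutely convergent series. -/
def thetaD (n : ℕ) (p q μ : ℂ) : ℂ :=
  (-(Real.pi : ℂ)) ^ n *
    ∑' m : ℤ, ((m : ℂ) + p) ^ (2 * n) *
      Complex.exp (-(Real.pi : ℂ) * ((m : ℂ) + p) ^ 2 * μ +
        2 * (Real.pi : ℂ) * Complex.I * ((m : ℂ) + p) * q)

/-- The n-th μ-derivative `∂μⁿ∂qθ[p,q](iμ)`, given by its absolutely convergent series. -/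
def thetaQD (n : ℕ) (p q μ : ℂ) : ℂ :=
  2 * Complex.I * (-1 : ℂ) ^ n * (Real.pi : ℂ) ^ (n + 1) *
    ∑' m : ℤ, ((m : ℂ) + p) ^ (2 * n + 1) *
      Complex.exp (-(Real.pi : ℂ) * ((m : ℂ) + p) ^ 2 * μ +
        2 * (Real.pi : ℂ) * Complex.I * ((m : ℂ) + p) * q)

/-- The constant `C(j|n) = (−i)ⁿ n! / (2ʲ (n−2j)! (2j)!!)` with `(2j)!! = 2ʲ j!`. -/
def Ccoef (j n : ℕ) : ℂ :=
  (-Complex.I) ^ n * (n.factorial : ℂ) /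
    ((2 : ℂ) ^ j * ((n - 2 * j).factorial : ℂ) * ((2 : ℂ) ^ j * (j.factorial : ℂ)))

/-- `w₁[p,q](iμ)` of the two-parametric family. -/
def w1 (p q μ : ℂ) : ℂ :=
  -(Complex.I / 2) * theta 0 0 μ * theta 0 (1 / 2) μ * thetaQ p (q + 1 / 2) μ /
    (Complex.exp ((Real.pi : ℂ) * Complex.I * p) * theta p q μ)

/-- `w₂[p,q](iμ)` of the two-parametric family. -/
def w2 (p q μ : ℂ) : ℂ :=
  (Complex.I / 2) * theta (1 / 2) 0 μ * theta 0 (1 / 2) μ *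
    thetaQ (p + 1 / 2) (q + 1 / 2) μ /
    (Complex.exp ((Real.pi : ℂ) * Complex.I * p) * theta p q μ)

/-- `w₃[p,q](iμ)` of the two-parametric family. -/
def w3 (p q μ : ℂ) : ℂ :=
  -(1 / 2 : ℂ) * theta (1 / 2) 0 μ * theta 0 0 μ * thetaQ (p + 1 / 2) q μ / theta p q μ

/-- The conformal factor `F[p,q](iμ)` of the two-parametric family. -/
def Ftwo (Λ p q μ : ℂ) : ℂ :=
  (2 / ((Real.pi : ℂ) * Λ)) * (theta p q μ / thetaQ p q μ) ^ 2

/-- `w₁[q₀](iμ)` of the one-parametric family. -/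
def v1 (q0 μ : ℂ) : ℂ := 1 / (μ + q0) + 2 * thetaD 1 (1 / 2) 0 μ / theta (1 / 2) 0 μ

/-- `w₂[q₀](iμ)` of the one-parametric family. -/
def v2 (q0 μ : ℂ) : ℂ := 1 / (μ + q0) + 2 * thetaD 1 0 0 μ / theta 0 0 μ

/-- `w₃[q₀](iμ)` of the one-parametric family. -/
def v3 (q0 μ : ℂ) : ℂ := 1 / (μ + q0) + 2 * thetaD 1 0 (1 / 2) μ / theta 0 (1 / 2) μ

/-- The conformal factor `F[q₀](iμ) = C(μ+q₀)²` of the one-parametric family. -/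
def Fone (C q0 μ : ℂ) : ℂ := C * (μ + q0) ^ 2

/-- The Seeley–de Witt coefficient `ã₀[p,q](iμ)` of the two-parametric family. -/
def a0two (Λ p q μ : ℂ) : ℂ :=
  4 * Ftwo Λ p q μ ^ 2 * w1 p q μ * w2 p q μ * w3 p q μ

/-- The Seeley–de Witt coefficient `ã₀[q₀](iμ)` of the one-parametric family. -/
def a0one (C q0 μ : ℂ) : ℂ :=
  4 * Fone C q0 μ ^ 2 * v1 q0 μ * v2 q0 μ * v3 q0 μ

/-- The Seeley–de Witt coefficient `ã₂[p,q](iμ)` of the two-parametric family. -/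
def a2two (Λ p q μ : ℂ) : ℂ :=
  -(Ftwo Λ p q μ / 3) * (w1 p q μ ^ 2 + w2 p q μ ^ 2 + w3 p q μ ^ 2) +
  (Ftwo Λ p q μ / 6) *
    ((w1 p q μ ^ 2 * w2 p q μ ^ 2 - deriv (w3 p q) μ ^ 2) / w3 p q μ ^ 2 +
     (w1 p q μ ^ 2 * w3 p q μ ^ 2 - deriv (w2 p q) μ ^ 2) / w2 p q μ ^ 2 +
     (w2 p q μ ^ 2 * w3 p q μ ^ 2 - deriv (w1 p q) μ ^ 2) / w1 p q μ ^ 2) -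
  (Ftwo Λ p q μ / 3) *
    (deriv (w1 p q) μ * deriv (w2 p q) μ / (w1 p q μ * w2 p q μ) +
     deriv (w1 p q) μ * deriv (w3 p q) μ / (w1 p q μ * w3 p q μ) +
     deriv (w2 p q) μ * deriv (w3 p q) μ / (w2 p q μ * w3 p q μ)) +
  (Ftwo Λ p q μ / 3) *
    (iteratedDeriv 2 (w1 p q) μ / w1 p q μ + iteratedDeriv 2 (w2 p q) μ / w2 p q μ +
     iteratedDeriv 2 (w3 p q) μ / w3 p q μ) -
  deriv (Ftwo Λ p q) μ ^ 2 / (2 * Ftwo Λ p q μ) + iteratedDeriv 2 (Ftwo Λ p q) μ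

/-! Poisson summation for a Gaussian is the case `n = 0`. Replace `q` by `q + s` in it: completing
the square on the dual side pulls out a factor `exp (-π μ s²)`, and what is left on either side
depends on `s` only through the linear term of the exponent, so that each `∂/∂s` brings down one
more power of the lattice variable. Now differentiate `n` times at `s = 0`. In the Leibniz rule only
the derivatives of even order `2 j` of `exp (-π μ s²)` survive, and they leave the moments of order
`n - 2 j` on the dual side. -/

lemma sum_range_succ_eq_sum_two_mul_of_odd {M : Type*} [AddCommMonoid M] {f : ℕ → M}
    (hf : ∀ i, Odd i → f i = 0) (n : ℕ) :
    ∑ i ∈ Finset.range (n + 1), f i = ∑ j ∈ Finset.range (n / 2 + 1), f (2 * j) := by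
  symm
  refine Finset.sum_of_injOn (2 * ·) (fun _ _ _ _ h => by simpa using h) ?_ ?_ fun _ _ => rfl
  · intro j hj
    simp only [Finset.coe_range, Set.mem_Iio] at hj ⊢
    lia
  · intro i hi hi'
    refine hf i (Nat.not_even_iff_odd.mp fun ⟨j, hj⟩ => hi' ⟨j, ?_, by lia⟩)
    simp only [Finset.coe_range, Set.mem_Iio, Finset.mem_range] at hi ⊢
    lia

section IteratedDeriv

open Complex
open scoped Nat

lemma iteratedDeriv_succ_id_mul_zero {𝕜 : Type*} [NontriviallyNormedField 𝕜] {f : 𝕜 → 𝕜} {n : ℕ}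
    (hf : ContDiffAt 𝕜 (n + 1 : ℕ) f 0) :
    iteratedDeriv (n + 1) (fun s => s * f s) 0 = (n + 1) * iteratedDeriv n f 0 := by
  rw [iteratedDeriv_fun_mul contDiffAt_fun_id hf, Finset.sum_eq_single 1]
  · simp
  · intro i _ hi
    simp [hi, iteratedDeriv_fun_id_zero]
  · simp

lemma deriv_cexp_const_mul_sq (b : ℂ) :
    deriv (fun s : ℂ => cexp (b * s ^ 2)) = fun s => 2 * b * (s * cexp (b * s ^ 2)) := by
  funext s
  refine (((hasDerivAt_pow 2 s).const_mul b).cexp.congr_deriv ?_).deriv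
  push_cast
  ring

lemma iteratedDeriv_add_two_cexp_const_mul_sq_zero (b : ℂ) (n : ℕ) :
    iteratedDeriv (n + 2) (fun s : ℂ => cexp (b * s ^ 2)) 0 =
      2 * b * (n + 1) * iteratedDeriv n (fun s : ℂ => cexp (b * s ^ 2)) 0 := by
  rw [iteratedDeriv_succ', deriv_cexp_const_mul_sq, iteratedDeriv_const_mul_field,
    iteratedDeriv_succ_id_mul_zero (by fun_prop), ← mul_assoc]

lemma iteratedDeriv_cexp_const_mul_sq_zero_of_odd (b : ℂ) {n : ℕ} (hn : Odd n) :
    iteratedDeriv n (fun s : ℂ => cexp (b * s ^ 2)) 0 = 0 := by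
  obtain ⟨j, rfl⟩ := hn
  induction j with
  | zero => simp [deriv_cexp_const_mul_sq]
  | succ j ih =>
    rw [show 2 * (j + 1) + 1 = 2 * j + 1 + 2 by ring, iteratedDeriv_add_two_cexp_const_mul_sq_zero,
      ih, mul_zero]

lemma iteratedDeriv_two_mul_cexp_const_mul_sq_zero (b : ℂ) (j : ℕ) :
    iteratedDeriv (2 * j) (fun s : ℂ => cexp (b * s ^ 2)) 0 = (2 * j)! / j ! * b ^ j := by
  induction j with
  | zero => simp
  | succ j ih =>
    have hj : (j ! : ℂ) ≠ 0 := mod_cast j.factorial_ne_zero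
    have hj' : (j + 1 : ℂ) ≠ 0 := mod_cast j.succ_ne_zero
    rw [mul_add_one, iteratedDeriv_add_two_cexp_const_mul_sq_zero, ih]
    simp only [Nat.factorial_succ]
    push_cast
    field_simp
    ring

lemma iteratedDeriv_cexp_const_mul_sq_mul_zero (b : ℂ) {f : ℂ → ℂ} {n : ℕ}
    (hf : ContDiffAt ℂ n f 0) :
    iteratedDeriv n (fun s => cexp (b * s ^ 2) * f s) 0 =
      ∑ j ∈ Finset.range (n / 2 + 1),
        n ! / ((n - 2 * j)! * j !) * b ^ j * iteratedDeriv (n - 2 * j) f 0 := by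
  rw [iteratedDeriv_fun_mul (by fun_prop) hf,
    sum_range_succ_eq_sum_two_mul_of_odd fun i hi => by
      rw [iteratedDeriv_cexp_const_mul_sq_zero_of_odd b hi, mul_zero, zero_mul]]
  refine Finset.sum_congr rfl fun j hj => ?_
  have hjn : 2 * j ≤ n := by
    have := Finset.mem_range.mp hj
    lia
  have hfact : ((2 * j)! : ℂ) ≠ 0 := mod_cast (2 * j).factorial_ne_zero
  rw [iteratedDeriv_two_mul_cexp_const_mul_sq_zero, Nat.cast_choose ℂ hjn]
  field_simp

end IteratedDeriv

section ThetaMoment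

open Complex Real

/-- The `m`-th summand of `thetaMoment k a z c`. -/
def thetaMomentTerm (k : ℕ) (a z c : ℂ) (m : ℤ) : ℂ :=
  (m + z) ^ k * cexp (-π * a * (m + z) ^ 2 + c * (m + z))

/-- The `k`-th moment of the Gaussian weight `x ↦ exp (-π a x² + c x)` on the shifted lattice
`ℤ + z`. The parameter `c` is independent of `a` and `z`, so that `∂/∂c` raises `k` by one. -/
def thetaMoment (k : ℕ) (a z c : ℂ) : ℂ :=
  ∑' m : ℤ, thetaMomentTerm k a z c m

variable {a : ℂ}

lemma thetaMomentTerm_eq_mul_jacobiTheta₂_term (k : ℕ) (a z c : ℂ) (m : ℤ) :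
    thetaMomentTerm k a z c m = cexp (-π * a * z ^ 2 + c * z) *
      ((m + z) ^ k * jacobiTheta₂_term m ((c - 2 * π * a * z) / (2 * π * I)) (I * a)) := by
  rw [thetaMomentTerm, jacobiTheta₂_term, mul_left_comm, ← Complex.exp_add]
  congr 2
  field_simp
  linear_combination (-π * a * m ^ 2) * I_sq

lemma summable_add_pow_mul_jacobiTheta₂_term_bound (r S : ℝ) {T : ℝ} (hT : 0 < T) (k : ℕ) :
    Summable fun m : ℤ => (|m| + r : ℝ) ^ k * rexp (-π * (T * m ^ 2 - 2 * S * |m|)) := by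
  simp only [add_pow, Finset.sum_mul]
  refine summable_sum fun i _ => ?_
  refine ((summable_pow_mul_jacobiTheta₂_term_bound S hT i).mul_left
    (r ^ (k - i) * k.choose i)).congr fun m => ?_
  ring

lemma exists_summable_norm_thetaMomentTerm_le (ha : 0 < a.re) (k : ℕ) (z : ℂ) (R : ℝ) :
    ∃ u : ℤ → ℝ, Summable u ∧ ∀ m c, ‖c‖ ≤ R → ‖thetaMomentTerm k a z c m‖ ≤ u m := by
  set S : ℝ := (R + ‖2 * π * a * z‖) / (2 * π)
  refine ⟨_, (summable_add_pow_mul_jacobiTheta₂_term_bound ‖z‖ S ha k).mul_left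
    (rexp (‖-π * a * z ^ 2‖ + R * ‖z‖)), fun m c hc => ?_⟩
  have hprefactor : ‖cexp (-π * a * z ^ 2 + c * z)‖ ≤ rexp (‖-π * a * z ^ 2‖ + R * ‖z‖) := by
    refine (norm_exp_le_exp_norm _).trans (Real.exp_le_exp.mpr ((norm_add_le _ _).trans ?_))
    rw [norm_mul c]
    gcongr
  have hpow : ‖(m + z : ℂ) ^ k‖ ≤ (|m| + ‖z‖ : ℝ) ^ k := by
    rw [norm_pow]
    gcongr
    simpa using norm_add_le (m : ℂ) z
  have him : |((c - 2 * π * a * z) / (2 * π * I)).im| ≤ S := by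
    have hden : ‖(2 * π * I : ℂ)‖ = 2 * π := by simp [abs_of_pos pi_pos]
    refine (abs_im_le_norm _).trans ?_
    rw [norm_div, hden]
    exact div_le_div_of_nonneg_right ((norm_sub_le _ _).trans (by gcongr)) two_pi_pos.le
  rw [thetaMomentTerm_eq_mul_jacobiTheta₂_term, norm_mul, norm_mul]
  gcongr
  exact mod_cast norm_jacobiTheta₂_term_le ha him (by simp) m

lemma summable_thetaMomentTerm (ha : 0 < a.re) (k : ℕ) (z c : ℂ) :
    Summable (thetaMomentTerm k a z c) := by
  obtain ⟨u, hu, hle⟩ := exists_summable_norm_thetaMomentTerm_le ha k z ‖c‖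
  exact .of_norm_bounded hu fun m => hle m c le_rfl

lemma hasDerivAt_thetaMomentTerm (k : ℕ) (a z c : ℂ) (m : ℤ) :
    HasDerivAt (thetaMomentTerm k a z · m) (thetaMomentTerm (k + 1) a z c m) c := by
  have hexponent : HasDerivAt (fun c => -π * a * (m + z) ^ 2 + c * (m + z)) (m + z) c :=
    (hasDerivAt_mul_const _).const_add _
  refine (hexponent.cexp.const_mul ((m + z) ^ k)).congr_deriv ?_
  rw [thetaMomentTerm]
  ring

lemma hasDerivAt_thetaMoment (ha : 0 < a.re) (k : ℕ) (z c : ℂ) :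
    HasDerivAt (thetaMoment k a z) (thetaMoment (k + 1) a z c) c := by
  obtain ⟨u, hu, hle⟩ := exists_summable_norm_thetaMomentTerm_le ha (k + 1) z (‖c‖ + 1)
  have hc : c ∈ Metric.ball 0 (‖c‖ + 1) := by simp
  exact hasDerivAt_tsum_of_isPreconnected hu Metric.isOpen_ball
    (convex_ball 0 _).isPreconnected (fun m w _ => hasDerivAt_thetaMomentTerm k a z w m)
    (fun m w hw => hle m w (mem_ball_zero_iff.mp hw).le) hc (summable_thetaMomentTerm ha k z c) hc

lemma contDiff_thetaMoment (ha : 0 < a.re) (k : ℕ) (z : ℂ) {n : WithTop ℕ∞} :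
    ContDiff ℂ n (thetaMoment k a z) :=
  Differentiable.contDiff fun c => (hasDerivAt_thetaMoment ha k z c).differentiableAt

lemma iteratedDeriv_thetaMoment (ha : 0 < a.re) (n k : ℕ) (z : ℂ) :
    iteratedDeriv n (thetaMoment k a z) = thetaMoment (k + n) a z := by
  induction n with
  | zero => rw [iteratedDeriv_zero, add_zero]
  | succ n ih =>
    rw [iteratedDeriv_succ, ih]
    exact funext fun c => (hasDerivAt_thetaMoment ha (k + n) z c).deriv

lemma iteratedDeriv_thetaMoment_comp_add_mul (ha : 0 < a.re) (n k : ℕ) (z c r : ℂ) :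
    iteratedDeriv n (fun s => thetaMoment k a z (c + r * s)) =
      fun s => r ^ n * thetaMoment (k + n) a z (c + r * s) := by
  have hshift : ContDiff ℂ n fun w => thetaMoment k a z (c + w) :=
    (contDiff_thetaMoment ha k z).comp (contDiff_const.add contDiff_id)
  rw [iteratedDeriv_comp_const_mul hshift, iteratedDeriv_comp_const_add,
    iteratedDeriv_thetaMoment ha]

lemma thetaMoment_zero_sub (a z c s : ℂ) :
    thetaMoment 0 a (z - s) c =
      cexp (-π * a * s ^ 2 - c * s) * thetaMoment 0 a z (c + 2 * π * a * s) := by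
  rw [thetaMoment, thetaMoment, ← tsum_mul_left]
  refine tsum_congr fun m => ?_
  simp only [thetaMomentTerm, pow_zero, one_mul, ← Complex.exp_add]
  congr 1
  ring

end ThetaMoment

section Poisson

open Complex Real
open scoped Nat

variable {μ : ℂ}

lemma inv_re_pos_of_re_pos (hμ : 0 < μ.re) : 0 < μ⁻¹.re := by
  have hμ0 : μ ≠ 0 := ne_zero_of_re_pos hμ
  rw [inv_re]
  exact div_pos hμ (normSq_pos.mpr hμ0)

lemma thetaMoment_zero_inv (hμ : 0 < μ.re) (p q : ℂ) :
    thetaMoment 0 μ⁻¹ p (2 * π * I * q) =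
      μ ^ (1 / 2 : ℂ) * cexp (2 * π * I * p * q) * thetaMoment 0 μ (-q) (2 * π * I * p) := by
  have hμ0 : μ ≠ 0 := ne_zero_of_re_pos hμ
  have hroot : μ ^ (1 / 2 : ℂ) ≠ 0 := by simp [cpow_eq_zero_iff, hμ0]
  have hdual : ∑' m : ℤ, cexp (-π * μ * m ^ 2 + 2 * π * (μ * q + I * p) * m) =
      cexp (π * μ * q ^ 2 + 2 * π * I * p * q) * thetaMoment 0 μ (-q) (2 * π * I * p) := by
    rw [thetaMoment, ← tsum_mul_left]
    refine tsum_congr fun m => ?_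
    rw [thetaMomentTerm, pow_zero, one_mul, ← Complex.exp_add]
    congr 1
    ring
  have hprimal : ∑' m : ℤ, cexp (-π / μ * (m + I * (μ * q + I * p)) ^ 2) =
      cexp (π * μ * q ^ 2) * thetaMoment 0 μ⁻¹ p (2 * π * I * q) := by
    rw [thetaMoment, ← tsum_mul_left, ← (Equiv.neg ℤ).tsum_eq]
    refine tsum_congr fun m => ?_
    rw [thetaMomentTerm, pow_zero, one_mul, ← Complex.exp_add, Equiv.neg_apply]
    congr 1
    have hcenter : ((-m : ℤ) : ℂ) + I * (μ * q + I * p) = -(m + p - I * μ * q) := by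
      push_cast
      linear_combination p * I_sq
    rw [hcenter]
    field_simp
    linear_combination (-μ ^ 2 * q ^ 2) * I_sq
  have hpoisson := Complex.tsum_exp_neg_quadratic hμ (μ * q + I * p)
  rw [hdual, hprimal, Complex.exp_add] at hpoisson
  refine mul_left_cancel₀ (mul_ne_zero (one_div_ne_zero hroot)
    (Complex.exp_ne_zero (π * μ * q ^ 2))) ?_
  rw [mul_assoc, ← hpoisson]
  field_simp

lemma thetaMoment_zero_inv_add (hμ : 0 < μ.re) (p q s : ℂ) :
    thetaMoment 0 μ⁻¹ p (2 * π * I * q + 2 * π * I * s) =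
      μ ^ (1 / 2 : ℂ) * cexp (2 * π * I * p * q) *
        (cexp (-π * μ * s ^ 2) * thetaMoment 0 μ (-q) (2 * π * I * p + 2 * π * μ * s)) := by
  have hexp : cexp (2 * π * I * p * (q + s)) * cexp (-π * μ * s ^ 2 - 2 * π * I * p * s) =
      cexp (2 * π * I * p * q) * cexp (-π * μ * s ^ 2) := by
    simp only [← Complex.exp_add]
    congr 1
    ring
  rw [← mul_add, thetaMoment_zero_inv hμ, neg_add', thetaMoment_zero_sub]
  linear_combination μ ^ (1 / 2 : ℂ) *
    thetaMoment 0 μ (-q) (2 * π * I * p + 2 * π * μ * s) * hexp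

/-- The left side comes from the Leibniz rule, up to factorials, with `r = n - 2 j`; the factor
`(2πi)ⁿ` is the one produced by the `n`-th derivative of the primal series. -/
lemma thetaMoment_inv_coeff (hμ : μ ≠ 0) (j r : ℕ) :
    μ ^ (1 / 2 : ℂ) * ((-π * μ) ^ j * (2 * π * μ) ^ r) =
      (2 * π * I) ^ (2 * j + r) *
        ((-I) ^ r * μ ^ ((2 * j + r : ℕ) + 1 / 2 - j : ℂ) / ((2 * π) ^ j * 2 ^ j)) := by
  have hpow : μ ^ ((2 * j + r : ℕ) + 1 / 2 - j : ℂ) = μ ^ (1 / 2 : ℂ) * μ ^ (j + r) := by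
    rw [← cpow_natCast, ← cpow_add _ _ hμ]
    congr 1
    push_cast
    ring
  have hunit : I ^ r * (-I) ^ r = 1 := by rw [← mul_pow, mul_neg, I_mul_I, neg_neg, one_pow]
  have hsign : I ^ (2 * j) * I ^ r * (-I) ^ r = (-1) ^ j := by
    rw [mul_assoc, hunit, mul_one, pow_mul, I_sq]
  have hπsq : (2 * π : ℂ) ^ (2 * j + r) = (2 * π) ^ j * 2 ^ j * π ^ j * (2 * π) ^ r := by ring
  rw [hpow, mul_pow _ I, pow_add I, hπsq, neg_mul, neg_pow, ← hsign]
  field_simp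
  ring

theorem thetaMoment_inv (hμ : 0 < μ.re) (n : ℕ) (p q : ℂ) :
    thetaMoment n μ⁻¹ p (2 * π * I * q) =
      cexp (2 * π * I * p * q) * ∑ j ∈ Finset.range (n / 2 + 1),
        ((-I) ^ (n - 2 * j) * μ ^ (n + 1 / 2 - j : ℂ) * n ! /
            ((2 * π) ^ j * (n - 2 * j)! * (2 ^ j * j !))) *
          thetaMoment (n - 2 * j) μ (-q) (2 * π * I * p) := by
  have hsmooth : ContDiffAt ℂ n (fun s => thetaMoment 0 μ (-q) (2 * π * I * p + 2 * π * μ * s)) 0 :=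
    ((contDiff_thetaMoment hμ 0 (-q)).comp
      (contDiff_const.add (contDiff_const.mul contDiff_id))).contDiffAt
  have hderiv := congrArg (iteratedDeriv n · 0) (funext (thetaMoment_zero_inv_add hμ p q))
  simp only [iteratedDeriv_const_mul_field,
    iteratedDeriv_cexp_const_mul_sq_mul_zero _ hsmooth,
    iteratedDeriv_thetaMoment_comp_add_mul hμ,
    iteratedDeriv_thetaMoment_comp_add_mul (inv_re_pos_of_re_pos hμ),
    mul_zero, add_zero, zero_add] at hderiv
  refine mul_left_cancel₀ (pow_ne_zero n two_pi_I_ne_zero) (hderiv.trans ?_)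
  simp only [Finset.mul_sum]
  refine Finset.sum_congr rfl fun j hj => ?_
  have hjn : 2 * j ≤ n := by
    have := Finset.mem_range.mp hj
    lia
  obtain ⟨r, rfl⟩ := Nat.exists_eq_add_of_le hjn
  rw [Nat.add_sub_cancel_left]
  linear_combination (cexp (2 * π * I * p * q) * (2 * j + r)! / (r ! * j !) *
    thetaMoment r μ (-q) (2 * π * I * p)) * thetaMoment_inv_coeff (ne_zero_of_re_pos hμ) j r

end Poisson

/-- Poisson-summation type identity (Lemma 5.1): for `Re μ > 0`,
`∑_{m∈ℤ} (m+p)ⁿ exp(−(π/μ)(m+p)² + 2πi(m+p)q)`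
equals `e^{2πipq}` times the stated finite sum of theta-type series, and all
the series involved converge absolutely. -/
theorem statement0 (p q μ : ℂ) (hμ : 0 < μ.re) (n : ℕ) :
    Summable (fun m : ℤ => ((m : ℂ) + p) ^ n *
      Complex.exp (-((Real.pi : ℂ) / μ) * ((m : ℂ) + p) ^ 2 +
        2 * (Real.pi : ℂ) * Complex.I * ((m : ℂ) + p) * q)) ∧
    (∀ j ∈ Finset.range (n / 2 + 1),
      Summable (fun m : ℤ => ((m : ℂ) - q) ^ (n - 2 * j) *
        Complex.exp (-(Real.pi : ℂ) * μ * ((m : ℂ) - q) ^ 2 +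
          2 * (Real.pi : ℂ) * Complex.I * p * ((m : ℂ) - q)))) ∧
    (∑' m : ℤ, ((m : ℂ) + p) ^ n *
        Complex.exp (-((Real.pi : ℂ) / μ) * ((m : ℂ) + p) ^ 2 +
          2 * (Real.pi : ℂ) * Complex.I * ((m : ℂ) + p) * q)) =
      Complex.exp (2 * (Real.pi : ℂ) * Complex.I * p * q) *
        ∑ j ∈ Finset.range (n / 2 + 1),
          ((-Complex.I) ^ (n - 2 * j) * μ ^ ((n : ℂ) + 1 / 2 - (j : ℂ)) *
              (n.factorial : ℂ) /
            ((2 * (Real.pi : ℂ)) ^ j * ((n - 2 * j).factorial : ℂ) *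
              ((2 : ℂ) ^ j * (j.factorial : ℂ)))) *
          (∑' m : ℤ, ((m : ℂ) - q) ^ (n - 2 * j) *
            Complex.exp (-(Real.pi : ℂ) * μ * ((m : ℂ) - q) ^ 2 +
              2 * (Real.pi : ℂ) * Complex.I * p * ((m : ℂ) - q))) := by
  have hprimal : ∀ m : ℤ, ((m : ℂ) + p) ^ n *
      Complex.exp (-((Real.pi : ℂ) / μ) * ((m : ℂ) + p) ^ 2 +
        2 * (Real.pi : ℂ) * Complex.I * ((m : ℂ) + p) * q) =
        thetaMomentTerm n μ⁻¹ p (2 * Real.pi * Complex.I * q) m := by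
    intro m
    rw [thetaMomentTerm]
    ring_nf
  have hdual : ∀ (k : ℕ) (m : ℤ), ((m : ℂ) - q) ^ k *
      Complex.exp (-(Real.pi : ℂ) * μ * ((m : ℂ) - q) ^ 2 +
        2 * (Real.pi : ℂ) * Complex.I * p * ((m : ℂ) - q)) =
        thetaMomentTerm k μ (-q) (2 * Real.pi * Complex.I * p) m := by
    intro k m
    rw [thetaMomentTerm, sub_eq_add_neg]
  simp only [hprimal, hdual]
  exact ⟨summable_thetaMomentTerm (inv_re_pos_of_re_pos hμ) n p _,
    fun j _ => summable_thetaMomentTerm hμ (n - 2 * j) (-q) _, thetaMoment_inv hμ n p q⟩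

end
end

section
/- Let μ ∈ ℂ with Re μ > 0 and let n ≥ 0 be an integer. Then: (i) ∂μⁿθ₂(iμ+1) = e^{πi/4} ∂μⁿθ₂(iμ); (ii) ∂μⁿθ₃(iμ+1) = ∂μⁿθ₄(iμ); (iii) ∂μⁿθ₄(iμ+1) = ∂μⁿθ₃(iμ); (iv) ∂μⁿθ₂(i/μ) = ∑_{j=0}^{n} C(j|2n) μ^{2n+1/2−j} ∂μ^{n−j}θ₄(iμ); (v) ∂μⁿθ₃(i/μ) = ∑_{j=0}^{n} C(j|2n) μ^{2n+1/2−j} ∂μ^{n−j}θ₃(iμ); (vi) ∂μⁿθ₄(i/μ) = ∑_{j=0}^{n} C(j|2n) μ^{2n+1/2−j} ∂μ^{n−j}θ₂(iμ). -/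
noncomputable section

/-!
For arbitrary characteristics `(p, q)`, completing the square gives
`θ[p,q](iμ) = exp(-πp²μ + 2πipq) ϑ(q + ipμ, iμ)`, where `ϑ` is the two-variable Jacobi theta
function, and its functional equation becomes `θ[p,q](i/μ) = exp(2πipq) μ^{1/2} θ[-q,p](iμ)`.
This relation is differentiated `n` times by an induction valid for any weight `s` in place of
`1/2`; the coefficients that arise are `(-1)ⁿ (n choose j) (s+n-1)(s+n-2)⋯(s+n-j)`, which for
`s = 1/2` are the constants `C(j|2n)`. The translation `iμ ↦ iμ + 1` acts on each term of the
series, because `m² ≡ m (mod 2)`.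
-/

open Complex Finset Filter
open scoped Real Topology

section InversionFormula

lemma cast_choose_succ_mul {R : Type*} [CommRing R] (n j : ℕ) :
    (n.choose (j + 1) : R) * (j + 1) = n.choose j * (n - j) := by
  have h := congrArg (Nat.cast (R := R)) (n.add_one_mul_choose_eq j)
  rw [Nat.choose_succ_succ'] at h
  push_cast at h
  linear_combination -h

/-- The coefficient of `z ^ (2 * n + s - j) • G⁽ⁿ⁻ʲ⁾ z` in the `n`-th derivative, taken at `z⁻¹`,
of a function `F` related to `G` by the weight `s` inversion law `F z⁻¹ = z ^ s • G z`. -/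
def inversionCoeff (s : ℂ) (n j : ℕ) : ℂ :=
  (-1) ^ n * n.choose j * (descPochhammer ℂ j).eval (s + n - 1)

lemma inversionCoeff_zero_right (s : ℂ) (n : ℕ) : inversionCoeff s n 0 = (-1) ^ n := by
  simp [inversionCoeff]

lemma inversionCoeff_eq_zero_of_lt (s : ℂ) {n j : ℕ} (h : n < j) : inversionCoeff s n j = 0 := by
  simp [inversionCoeff, Nat.choose_eq_zero_of_lt h]

lemma inversionCoeff_succ_succ (s : ℂ) (n j : ℕ) :
    inversionCoeff s (n + 1) (j + 1) =
      -inversionCoeff s n (j + 1) - (2 * n + s - j) * inversionCoeff s n j := by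
  have hleft : (descPochhammer ℂ (j + 1)).eval (s + n) =
      (s + n) * (descPochhammer ℂ j).eval (s + n - 1) := by
    simp [descPochhammer_succ_left]
  have hright : (descPochhammer ℂ (j + 1)).eval (s + n - 1) =
      (descPochhammer ℂ j).eval (s + n - 1) * (s + n - 1 - j) :=
    descPochhammer_succ_eval j _
  have hshift : s + ((n + 1 : ℕ) : ℂ) - 1 = s + n := by push_cast; ring
  rw [inversionCoeff, inversionCoeff, inversionCoeff, hshift, hleft, hright,
    Nat.choose_succ_succ', Nat.cast_add]
  linear_combination (-1) ^ (n + 1) * (descPochhammer ℂ j).eval (s + n - 1) *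
    cast_choose_succ_mul (R := ℂ) n j

variable {E : Type*} [NormedAddCommGroup E] [NormedSpace ℂ E]

/-- The expression for the `n`-th derivative of `F` at `z⁻¹` when `F z⁻¹ = z ^ s • G 0 z`, where
`G k` stands for the `k`-th derivative of `G 0`. -/
def inversionSum (s : ℂ) (G : ℕ → ℂ → E) (n : ℕ) (z : ℂ) : E :=
  ∑ j ∈ range (n + 1), (inversionCoeff s n j * z ^ (2 * n + s - j)) • G (n - j) z

lemma inversionSum_zero (s : ℂ) (G : ℕ → ℂ → E) (z : ℂ) :
    inversionSum s G 0 z = z ^ s • G 0 z := by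
  simp [inversionSum, inversionCoeff_zero_right]

lemma inversionSum_succ (s : ℂ) (G : ℕ → ℂ → E) (n : ℕ) (z : ℂ) :
    inversionSum s G (n + 1) z = -∑ j ∈ range (n + 1), inversionCoeff s n j •
      (z ^ (2 * n + s - j + 2) • G (n - j + 1) z +
        ((2 * n + s - j) * z ^ (2 * n + s - j + 1)) • G (n - j) z) := by
  set a := inversionCoeff s n with ha
  set f : ℕ → E := fun j ↦ z ^ (2 * n + s - j + 2) • G (n + 1 - j) z with hf
  have hf_succ (j : ℕ) : f (j + 1) = z ^ (2 * n + s - j + 1) • G (n - j) z := by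
    simp only [hf, Nat.add_sub_add_right]
    push_cast
    ring_nf
  have hsum_a : ∑ j ∈ range (n + 1), a (j + 1) • f (j + 1) + a 0 • f 0 =
      ∑ j ∈ range (n + 1), a j • f j := by
    rw [← sum_range_succ' (fun j ↦ a j • f j), sum_range_succ, ha,
      inversionCoeff_eq_zero_of_lt s n.lt_succ_self, zero_smul, add_zero]
  calc inversionSum s G (n + 1) z
      = ∑ j ∈ range (n + 2), inversionCoeff s (n + 1) j • f j := by
        refine sum_congr rfl fun j _ ↦ ?_
        rw [mul_smul, show 2 * ((n + 1 : ℕ) : ℂ) + s - j = 2 * n + s - j + 2 by push_cast; ring]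
    _ = ∑ j ∈ range (n + 1), (-a (j + 1) - (2 * n + s - j) * a j) • f (j + 1) - a 0 • f 0 := by
        rw [sum_range_succ', inversionCoeff_zero_right, ha, inversionCoeff_zero_right, pow_succ]
        simp only [inversionCoeff_succ_succ]
        module
    _ = -∑ j ∈ range (n + 1), a j • f j -
          ∑ j ∈ range (n + 1), ((2 * n + s - j) * a j) • f (j + 1) := by
        rw [← hsum_a]
        simp only [sub_smul, neg_smul, sum_sub_distrib, sum_neg_distrib]
        abel
    _ = _ := by
        rw [← neg_add', ← sum_add_distrib]
        refine congrArg Neg.neg (sum_congr rfl fun j hj ↦ ?_)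
        have hsub : n - j + 1 = n + 1 - j := by grind
        rw [hf_succ, hsub]
        module

lemma hasDerivAt_inversionSum (s : ℂ) {G : ℕ → ℂ → E} {z : ℂ} (hz : z ∈ slitPlane)
    (hG : ∀ k, HasDerivAt (G k) (G (k + 1) z) z) (n : ℕ) :
    HasDerivAt (inversionSum s G n) (-(z ^ 2)⁻¹ • inversionSum s G (n + 1) z) z := by
  have hz0 : z ≠ 0 := slitPlane_ne_zero hz
  have hterm (j : ℕ) : HasDerivAt
      (fun w ↦ (inversionCoeff s n j * w ^ (2 * n + s - j)) • G (n - j) w)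
      ((inversionCoeff s n j * z ^ (2 * n + s - j)) • G (n - j + 1) z +
        (inversionCoeff s n j * ((2 * n + s - j) * z ^ (2 * n + s - j - 1))) • G (n - j) z) z := by
    have hpow := ((hasDerivAt_id z).cpow_const (c := 2 * n + s - j) hz).const_mul
      (inversionCoeff s n j)
    rw [mul_one] at hpow
    exact hpow.smul (hG (n - j))
  refine (HasDerivAt.fun_sum fun j _ ↦ hterm j).congr_deriv ?_
  rw [inversionSum_succ, smul_neg, neg_smul, neg_neg, smul_sum]
  refine sum_congr rfl fun j _ ↦ ?_
  rw [cpow_sub _ 1 hz0, cpow_add _ 1 hz0, cpow_add _ 2 hz0, cpow_one, cpow_ofNat]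
  match_scalars <;> field_simp

theorem eq_inversionSum_of_hasDerivAt {s : ℂ} {U : Set ℂ} (hU : IsOpen U) (hUs : U ⊆ slitPlane)
    {F G : ℕ → ℂ → E} (hF : ∀ k, ∀ z ∈ U, HasDerivAt (F k) (F (k + 1) z⁻¹) z⁻¹)
    (hG : ∀ k, ∀ z ∈ U, HasDerivAt (G k) (G (k + 1) z) z)
    (h : ∀ z ∈ U, F 0 z⁻¹ = z ^ s • G 0 z) (n : ℕ) :
    ∀ z ∈ U, F n z⁻¹ = inversionSum s G n z := by
  induction n with
  | zero => exact fun z hz ↦ (h z hz).trans (inversionSum_zero s G z).symm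
  | succ n ih =>
    intro z hz
    have hz0 : z ≠ 0 := slitPlane_ne_zero (hUs hz)
    have hF' : HasDerivAt (fun w ↦ F n w⁻¹) (-(z ^ 2)⁻¹ • F (n + 1) z⁻¹) z :=
      (hF n z hz).scomp z (hasDerivAt_inv hz0)
    have hG' : HasDerivAt (fun w ↦ F n w⁻¹) (-(z ^ 2)⁻¹ • inversionSum s G (n + 1) z) z :=
      (hasDerivAt_inversionSum s (hUs hz) (fun k ↦ hG k z hz) n).congr_of_eventuallyEq
        (eventually_of_mem (hU.mem_nhds hz) ih)
    exact smul_right_injective E (by simpa using hz0) (hF'.unique hG')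

end InversionFormula

lemma four_mul_Ccoef_succ {j n : ℕ} (h : 2 * j + 2 ≤ n) :
    4 * (j + 1) * Ccoef (j + 1) n = (n - 2 * j) * (n - 2 * j - 1) * Ccoef j n := by
  obtain ⟨k, rfl⟩ := Nat.exists_eq_add_of_le h
  have hk2 : (k : ℂ) + 1 + 1 ≠ 0 := mod_cast (k + 1).cast_add_one_ne_zero (R := ℂ)
  rw [Ccoef, Ccoef, show 2 * j + 2 + k - 2 * (j + 1) = k by omega,
    show 2 * j + 2 + k - 2 * j = k + 1 + 1 by omega, Nat.factorial_succ j,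
    Nat.factorial_succ (k + 1), Nat.factorial_succ k]
  push_cast
  field_simp
  ring

lemma Ccoef_two_mul {j n : ℕ} (h : j ≤ n) : Ccoef j (2 * n) = inversionCoeff (1 / 2) n j := by
  induction j with
  | zero =>
    have hfac : ((2 * n).factorial : ℂ) ≠ 0 := mod_cast (2 * n).factorial_ne_zero
    simp [Ccoef, inversionCoeff_zero_right, pow_mul, hfac]
  | succ j ih =>
    have hj1 : (4 : ℂ) * (j + 1) ≠ 0 := mul_ne_zero (by norm_num) j.cast_add_one_ne_zero
    refine mul_left_cancel₀ hj1 ?_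
    rw [four_mul_Ccoef_succ (by omega), ih (Nat.le_of_succ_le h), inversionCoeff, inversionCoeff,
      descPochhammer_succ_eval]
    push_cast
    linear_combination -4 * (-1) ^ n * (descPochhammer ℂ j).eval (1 / 2 + n - 1 : ℂ) *
      (1 / 2 + n - 1 - j) * cast_choose_succ_mul (R := ℂ) n j

section Theta

/-- The `m`-th term of the series defining `theta p q μ`. -/
def thetaTerm (p q μ : ℂ) (m : ℤ) : ℂ :=
  exp (-π * (m + p) ^ 2 * μ + 2 * π * I * (m + p) * q)

lemma thetaD_eq_tsum_thetaTerm (n : ℕ) (p q μ : ℂ) :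
    thetaD n p q μ = (-π) ^ n * ∑' m : ℤ, (m + p) ^ (2 * n) * thetaTerm p q μ m := rfl

lemma thetaD_zero (p q : ℂ) : thetaD 0 p q = theta p q := by
  ext μ
  simp [thetaD, theta]

lemma thetaTerm_eq_mul_jacobiTheta₂_term (p q μ : ℂ) (m : ℤ) :
    thetaTerm p q μ m =
      exp (-π * p ^ 2 * μ + 2 * π * I * p * q) * jacobiTheta₂_term m (q + I * p * μ) (I * μ) := by
  rw [thetaTerm, jacobiTheta₂_term, ← exp_add]
  congr 1
  linear_combination (-(π : ℂ) * μ * (2 * m * p + m ^ 2)) * I_sq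

lemma theta_eq_mul_jacobiTheta₂ (p q μ : ℂ) :
    theta p q μ =
      exp (-π * p ^ 2 * μ + 2 * π * I * p * q) * jacobiTheta₂ (q + I * p * μ) (I * μ) := by
  rw [jacobiTheta₂, ← tsum_mul_left]
  exact tsum_congr (thetaTerm_eq_mul_jacobiTheta₂_term p q μ)

section Derivative

lemma norm_add_pow_le {R : Type*} [SeminormedRing R] [NormOneClass R] (a b : R) (k : ℕ) :
    ‖(a + b) ^ k‖ ≤ 2 ^ (k - 1) * (‖a‖ ^ k + ‖b‖ ^ k) :=
  calc ‖(a + b) ^ k‖ ≤ ‖a + b‖ ^ k := norm_pow_le _ k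
    _ ≤ (‖a‖ + ‖b‖) ^ k := by gcongr; exact norm_add_le a b
    _ ≤ _ := add_pow_le (norm_nonneg a) (norm_nonneg b) k

lemma exists_summable_eventually_norm_thetaTerm_le (k : ℕ) (p q : ℂ) {μ : ℂ} (hμ : 0 < μ.re) :
    ∃ u : ℤ → ℝ, Summable u ∧ ∀ᶠ z in 𝓝 μ, ∀ m, ‖(m + p) ^ k * thetaTerm p q z m‖ ≤ u m := by
  let C : ℂ → ℂ := fun z ↦ exp (-π * p ^ 2 * z + 2 * π * I * p * q)
  let v : ℂ → ℂ := fun z ↦ q + I * p * z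
  let S := |(v μ).im| + 1
  let T := μ.re / 2
  have hT : 0 < T := half_pos hμ
  have hC : ∀ᶠ z in 𝓝 μ, ‖C z‖ ≤ ‖C μ‖ + 1 :=
    (show Continuous fun z ↦ ‖C z‖ by fun_prop).continuousAt.eventually_le_const (lt_add_one _)
  have hS : ∀ᶠ z in 𝓝 μ, |(v z).im| ≤ S :=
    (show Continuous fun z ↦ |(v z).im| by fun_prop).continuousAt.eventually_le_const (lt_add_one _)
  have hre : ∀ᶠ z : ℂ in 𝓝 μ, T ≤ z.re :=
    continuous_re.continuousAt.eventually_const_le (half_lt_self hμ)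
  let bound : ℕ → ℤ → ℝ := fun i m ↦ |(m : ℝ)| ^ i * Real.exp (-π * (T * m ^ 2 - 2 * S * |m|))
  have hbound (i : ℕ) : Summable (bound i) := by
    simpa only [bound, Int.cast_abs] using summable_pow_mul_jacobiTheta₂_term_bound S hT i
  refine ⟨fun m ↦ (‖C μ‖ + 1) * 2 ^ (k - 1) * (bound k m + ‖p‖ ^ k * bound 0 m),
    ((hbound k).add ((hbound 0).mul_left _)).mul_left _, ?_⟩
  filter_upwards [hC, hS, hre] with z hCz hSz hTz m
  have hjacobi : ‖jacobiTheta₂_term m (v z) (I * z)‖ ≤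
      Real.exp (-π * (T * m ^ 2 - 2 * S * |m|)) :=
    norm_jacobiTheta₂_term_le hT hSz (by simpa using hTz) m
  calc ‖(m + p) ^ k * thetaTerm p q z m‖
      = ‖(m + p) ^ k‖ * (‖C z‖ * ‖jacobiTheta₂_term m (v z) (I * z)‖) := by
        rw [thetaTerm_eq_mul_jacobiTheta₂_term, norm_mul, norm_mul]
    _ ≤ (2 ^ (k - 1) * (|(m : ℝ)| ^ k + ‖p‖ ^ k)) *
          ((‖C μ‖ + 1) * Real.exp (-π * (T * m ^ 2 - 2 * S * |m|))) := by
        gcongr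
        simpa only [Complex.norm_intCast] using norm_add_pow_le (m : ℂ) p k
    _ = _ := by
        simp only [bound]
        ring

lemma hasDerivAt_thetaTerm (p q μ : ℂ) (m : ℤ) :
    HasDerivAt (thetaTerm p q · m) (-π * (m + p) ^ 2 * thetaTerm p q μ m) μ := by
  have hexponent := ((hasDerivAt_id μ).const_mul (-(π : ℂ) * (m + p) ^ 2)).add_const
    (2 * π * I * (m + p) * q)
  refine hexponent.cexp.congr_deriv ?_
  rw [mul_one, mul_comm]
  rfl

theorem hasDerivAt_thetaD (n : ℕ) (p q : ℂ) {μ : ℂ} (hμ : 0 < μ.re) :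
    HasDerivAt (thetaD n p q) (thetaD (n + 1) p q μ) μ := by
  obtain ⟨u, hu, hle⟩ := exists_summable_eventually_norm_thetaTerm_le (2 * n) p q hμ
  obtain ⟨U, hUle, hU, hμU⟩ := eventually_nhds_iff.mp hle
  have hterm (m : ℤ) (z : ℂ) : HasDerivAt (fun z ↦ (m + p) ^ (2 * n) * thetaTerm p q z m)
      (-π * ((m + p) ^ (2 * (n + 1)) * thetaTerm p q z m)) z :=
    ((hasDerivAt_thetaTerm p q z m).const_mul _).congr_deriv (by ring)
  have hdiffOn (m : ℤ) : DifferentiableOn ℂ (fun z ↦ (m + p) ^ (2 * n) * thetaTerm p q z m) U :=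
    fun z _ ↦ (hterm m z).differentiableAt.differentiableWithinAt
  have hdiff := (differentiableOn_tsum_of_summable_norm hu hdiffOn hU
    fun m z hz ↦ hUle z hz m).differentiableAt (hU.mem_nhds hμU)
  have hderiv := (hasSum_deriv_of_summable_norm hu hdiffOn hU
    (fun m z hz ↦ hUle z hz m) hμU).tsum_eq
  refine (hdiff.hasDerivAt.const_mul ((-π : ℂ) ^ n)).congr_deriv ?_
  simp only [← hderiv, (hterm _ μ).deriv, tsum_mul_left, thetaD_eq_tsum_thetaTerm]
  ring

end Derivative

section Translation

lemma thetaD_eq_mul_of_thetaTerm_eq {c p q q' μ μ' : ℂ}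
    (h : ∀ m, thetaTerm p q μ m = c * thetaTerm p q' μ' m) (n : ℕ) :
    thetaD n p q μ = c * thetaD n p q' μ' := by
  simp only [thetaD_eq_tsum_thetaTerm, h, mul_left_comm _ c, tsum_mul_left]

lemma thetaD_add_one_left (n : ℕ) (p q μ : ℂ) : thetaD n (p + 1) q μ = thetaD n p q μ := by
  rw [thetaD_eq_tsum_thetaTerm, thetaD_eq_tsum_thetaTerm,
    ← (Equiv.addRight (1 : ℤ)).tsum_eq fun m ↦ (m + p) ^ (2 * n) * thetaTerm p q μ m]
  simp only [thetaTerm, Equiv.coe_addRight, Int.cast_add, Int.cast_one, add_assoc, add_comm p]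

lemma thetaD_add_one_right (n : ℕ) (p q μ : ℂ) :
    thetaD n p (q + 1) μ = exp (2 * π * I * p) * thetaD n p q μ := by
  refine thetaD_eq_mul_of_thetaTerm_eq (fun m ↦ ?_) n
  rw [thetaTerm, thetaTerm, ← exp_add]
  refine .trans (congrArg exp ?_) (exp_periodic.int_mul m _)
  ring

theorem thetaD_sub_I (n : ℕ) (p q μ : ℂ) :
    thetaD n p q (μ - I) = exp (-(π * I * p * (p + 1))) * thetaD n p (q + p + 1 / 2) μ := by
  refine thetaD_eq_mul_of_thetaTerm_eq (fun m ↦ ?_) n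
  obtain ⟨r, hr⟩ := Int.even_mul_pred_self m
  have hr' : (m : ℂ) * (m - 1) = r + r := mod_cast hr
  rw [thetaTerm, thetaTerm, ← exp_add]
  refine .trans (congrArg exp ?_) (exp_periodic.int_mul r _)
  linear_combination π * I * hr'

end Translation

section Inversion

theorem theta_inv (p q : ℂ) {μ : ℂ} (hμ : 0 < μ.re) :
    theta p q μ⁻¹ = exp (2 * π * I * p * q) * μ ^ (1 / 2 : ℂ) * theta (-q) p μ := by
  have hμs : μ ∈ slitPlane := .inl hμ
  have hμ0 : μ ≠ 0 := slitPlane_ne_zero hμs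
  have hz : (q + I * p * μ⁻¹) / (I * μ⁻¹) = p + I * -q * μ := by
    field_simp
    linear_combination μ * q * I_sq
  have hτ : -1 / (I * μ⁻¹) = I * μ := by
    field_simp
    exact I_sq.symm
  have hcpow : 1 / (-I * (I * μ⁻¹)) ^ (1 / 2 : ℂ) = μ ^ (1 / 2 : ℂ) := by
    rw [← mul_assoc, neg_mul, I_mul_I, neg_neg, one_mul,
      inv_cpow _ _ (slitPlane_arg_ne_pi hμs), one_div, inv_inv]
  have hexp : exp (-π * p ^ 2 * μ⁻¹ + 2 * π * I * p * q) *
      exp (-π * I * (q + I * p * μ⁻¹) ^ 2 / (I * μ⁻¹)) =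
      exp (2 * π * I * p * q) * exp (-π * (-q) ^ 2 * μ + 2 * π * I * -q * p) := by
    rw [← exp_add, ← exp_add]
    congr 1
    field_simp
    linear_combination -p ^ 2 * I_sq
  rw [theta_eq_mul_jacobiTheta₂, jacobiTheta₂_functional_equation, theta_eq_mul_jacobiTheta₂,
    hz, hτ, hcpow]
  linear_combination μ ^ (1 / 2 : ℂ) * jacobiTheta₂ (p + I * -q * μ) (I * μ) * hexp

theorem thetaD_inv (n : ℕ) (p q : ℂ) {μ : ℂ} (hμ : 0 < μ.re) :
    thetaD n p q μ⁻¹ = exp (2 * π * I * p * q) * ∑ j ∈ range (n + 1),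
      Ccoef j (2 * n) * μ ^ (2 * (n : ℂ) + 1 / 2 - j) * thetaD (n - j) (-q) p μ := by
  let c := exp (2 * π * I * p * q)
  have hinv (z : ℂ) (hz : 0 < z.re) : 0 < z⁻¹.re := by
    rw [inv_re]
    exact div_pos hz (normSq_pos.mpr (slitPlane_ne_zero (.inl hz)))
  have h := eq_inversionSum_of_hasDerivAt (s := 1 / 2) (F := fun k ↦ thetaD k p q)
    (G := fun k z ↦ c * thetaD k (-q) p z) (isOpen_lt continuous_const continuous_re)
    (fun _ ↦ .inl) (fun k z hz ↦ hasDerivAt_thetaD k p q (hinv z hz))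
    (fun k z hz ↦ (hasDerivAt_thetaD k (-q) p hz).const_mul c)
    (fun z hz ↦ by
      simp only [thetaD_zero, theta_inv p q hz, smul_eq_mul, c]
      ring) n μ hμ
  rw [h, inversionSum, mul_sum]
  refine sum_congr rfl fun j hj ↦ ?_
  rw [Ccoef_two_mul (Nat.lt_succ_iff.mp (mem_range.mp hj)), smul_eq_mul]
  ring

end Inversion

end Theta

/-- Lemma 5.4: modular transformation properties of `θ₂ = θ[1/2,0]`, `θ₃ = θ[0,0]`,
`θ₄ = θ[0,1/2]` and their μ-derivatives under `iμ ↦ iμ+1` and `iμ ↦ i/μ`. -/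
theorem statement4 (μ : ℂ) (hμ : 0 < μ.re) (n : ℕ) :
    thetaD n (1 / 2) 0 (μ - Complex.I) =
        Complex.exp ((Real.pi : ℂ) * Complex.I / 4) * thetaD n (1 / 2) 0 μ ∧
    thetaD n 0 0 (μ - Complex.I) = thetaD n 0 (1 / 2) μ ∧
    thetaD n 0 (1 / 2) (μ - Complex.I) = thetaD n 0 0 μ ∧
    thetaD n (1 / 2) 0 (1 / μ) =
        ∑ j ∈ Finset.range (n + 1),
          Ccoef j (2 * n) * μ ^ (2 * (n : ℂ) + 1 / 2 - (j : ℂ)) *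
            thetaD (n - j) 0 (1 / 2) μ ∧
    thetaD n 0 0 (1 / μ) =
        ∑ j ∈ Finset.range (n + 1),
          Ccoef j (2 * n) * μ ^ (2 * (n : ℂ) + 1 / 2 - (j : ℂ)) *
            thetaD (n - j) 0 0 μ ∧
    thetaD n 0 (1 / 2) (1 / μ) =
        ∑ j ∈ Finset.range (n + 1),
          Ccoef j (2 * n) * μ ^ (2 * (n : ℂ) + 1 / 2 - (j : ℂ)) *
            thetaD (n - j) (1 / 2) 0 μ := by
  refine ⟨?_, ?_, ?_, ?_, ?_, ?_⟩
  · have hphase : exp (-(π * I * (1 / 2) * (1 / 2 + 1))) * exp (2 * π * I * (1 / 2)) =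
        exp (π * I / 4) := by
      rw [← exp_add]
      congr 1
      ring
    rw [thetaD_sub_I, add_assoc, add_halves, thetaD_add_one_right, ← mul_assoc, hphase]
  · simpa using thetaD_sub_I n 0 0 μ
  · rw [thetaD_sub_I, add_zero, add_halves, ← zero_add (1 : ℂ), thetaD_add_one_right]
    simp
  · simpa using thetaD_inv n (1 / 2) 0 hμ
  · simpa using thetaD_inv n 0 0 hμ
  · have hneg (k : ℕ) : thetaD k (-(1 / 2)) 0 μ = thetaD k (1 / 2) 0 μ := by
      rw [← thetaD_add_one_left]
      norm_num
    simpa only [one_div μ, hneg, mul_zero, zero_mul, exp_zero, one_mul]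
      using thetaD_inv n 0 (1 / 2) hμ

end
end

section
/- Let p, q ∈ ℂ and μ ∈ ℂ with Re μ > 0, and assume θ[p,q](iν) ≠ 0 for every ν with Re ν > 0. Then: w₁[p,q](i/μ) = μ² w₃[−q,p](iμ); w₁'[p,q](i/μ) = −μ⁴ w₃'[−q,p](iμ) − 2μ³ w₃[−q,p](iμ); w₁''[p,q](i/μ) = μ⁶ w₃''[−q,p](iμ) + 6μ⁵ w₃'[−q,p](iμ) + 6μ⁴ w₃[−q,p](iμ); w₁⁽³⁾[p,q](i/μ) = −μ⁸ w₃⁽³⁾[−q,p](iμ) − 12μ⁷ w₃''[−q,p](iμ) − 36μ⁶ w₃'[−q,p](iμ) − 24μ⁵ w₃[−q,p](iμ); w₁⁽⁴⁾[p,q](i/μ) = μ¹⁰ w₃⁽⁴⁾[−q,p](iμ) + 20μ⁹ w₃⁽³⁾[−q,p](iμ) + 120μ⁸ w₃''[−q,p](iμ) + 240μ⁷ w₃'[−q,p](iμ) + 120μ⁶ w₃[−q,p](iμ). -/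
noncomputable section

/-!
Poisson summation, in the form of the functional equations of `jacobiTheta₂` and `jacobiTheta₂'`,
shows that `w1 p q` has weight two under inversion: `w1 p q (1 / μ) = μ ^ 2 * w3 (-q) p μ`; the
half-integer powers of `μ` and the exponential factors cancel. For any pair of functions with
`f (1 / x) = x ^ (k + 1) * g x`, induction on `n` gives the compact formula
`f⁽ⁿ⁾ (1 / x) = (-1) ^ n * x ^ (n + 1) * (d / dx) ^ n (x ^ (n + k) * g x)`, which Leibniz's rule
expands into derivatives of `g`. The theorem is the case `k = 1`, `n ≤ 4`.
-/

open Complex Filter Topology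
open scoped Real

section Inversion

variable {𝕜 : Type*} [NontriviallyNormedField 𝕜] {n : ℕ} {x : 𝕜}

lemma hasDerivAt_iteratedDeriv {F : Type*} [NormedAddCommGroup F] [NormedSpace 𝕜 F] {g : 𝕜 → F}
    (hg : ContDiffAt 𝕜 (n + 1 : ℕ) g x) :
    HasDerivAt (iteratedDeriv n g) (iteratedDeriv (n + 1) g x) x := by
  have h : DifferentiableWithinAt 𝕜 (iteratedDerivWithin n g Set.univ) Set.univ x :=
    hg.contDiffWithinAt.differentiableWithinAt_iteratedDerivWithin
      (by exact_mod_cast n.lt_succ_self) (by simp [uniqueDiffOn_univ])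
  rw [iteratedDerivWithin_univ, differentiableWithinAt_univ] at h
  simpa only [iteratedDeriv_succ] using h.hasDerivAt

lemma hasDerivAt_of_comp_inv_eventuallyEq {F : Type*} [NormedAddCommGroup F] [NormedSpace 𝕜 F]
    {f g : 𝕜 → F} {g' : F} (hx : x ≠ 0) (hfg : ∀ᶠ y in 𝓝 x, f y⁻¹ = g y)
    (hg : HasDerivAt g g' x) : HasDerivAt f (-x ^ 2 • g') x⁻¹ := by
  have hinv : Tendsto (fun y : 𝕜 => y⁻¹) (𝓝 x⁻¹) (𝓝 x) := by
    simpa only [inv_inv] using tendsto_inv₀ (inv_ne_zero hx)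
  have hf : f =ᶠ[𝓝 x⁻¹] g ∘ fun y => y⁻¹ := by
    filter_upwards [hinv.eventually hfg] with y hy
    simpa only [Function.comp_apply, inv_inv] using hy
  have hg_inv : HasDerivAt g g' x⁻¹⁻¹ := by rwa [inv_inv]
  simpa only [inv_pow, inv_inv] using
    (hg_inv.scomp x⁻¹ (hasDerivAt_inv (inv_ne_zero hx))).congr_of_eventuallyEq hf

variable {f g : 𝕜 → 𝕜}

lemma iteratedDeriv_pow_mul (m : ℕ) (hg : ContDiffAt 𝕜 n g x) :
    iteratedDeriv n (fun y => y ^ m * g y) x =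
      ∑ i ∈ Finset.range (n + 1),
        n.choose i * (m.descFactorial i * x ^ (m - i)) * iteratedDeriv (n - i) g x := by
  simp only [iteratedDeriv_fun_mul (contDiffAt_fun_id.pow m) hg, iteratedDeriv_pow]

lemma iteratedDeriv_succ_id_mul (hg : ContDiffAt 𝕜 (n + 1 : ℕ) g x) :
    iteratedDeriv (n + 1) (fun y => y * g y) x =
      x * iteratedDeriv (n + 1) g x + (n + 1) * iteratedDeriv n g x := by
  rw [iteratedDeriv_fun_mul contDiffAt_fun_id hg, Finset.sum_range_succ', Finset.sum_range_succ']
  simp [iteratedDeriv_fun_id, add_comm]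

lemma iteratedDeriv_of_comp_inv_eventuallyEq (k : ℕ) (hx : x ≠ 0) (hg : ContDiffAt 𝕜 n g x)
    (hfg : ∀ᶠ y in 𝓝 x, f y⁻¹ = y ^ (k + 1) * g y) :
    iteratedDeriv n f x⁻¹ =
      (-1) ^ n * x ^ (n + 1) * iteratedDeriv n (fun y => y ^ (n + k) * g y) x := by
  induction n generalizing x with
  | zero => simpa [pow_succ', mul_assoc] using hfg.self_of_nhds
  | succ n ih =>
    set h : 𝕜 → 𝕜 := fun y => y ^ (n + k) * g y with h_def
    have hh : ContDiffAt 𝕜 (n + 1 : ℕ) h x := (contDiffAt_fun_id.pow _).mul hg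
    have ih_near : ∀ᶠ y in 𝓝 x,
        iteratedDeriv n f y⁻¹ = (-1) ^ n * y ^ (n + 1) * iteratedDeriv n h y := by
      filter_upwards [hfg.eventually_nhds, eventually_ne_nhds hx, hg.eventually (by simp)]
        with y hfy hy hgy
      exact ih hy (hgy.of_le (by exact_mod_cast n.le_succ)) hfy
    have h_deriv := ((hasDerivAt_pow (n + 1) x).const_mul ((-1) ^ n)).mul
      (hasDerivAt_iteratedDeriv hh)
    have h_mul : (fun y => y ^ (n + 1 + k) * g y) = fun y => y * h y := by
      funext y
      rw [h_def]
      ring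
    rw [iteratedDeriv_succ, (hasDerivAt_of_comp_inv_eventuallyEq hx ih_near h_deriv).deriv, h_mul,
      iteratedDeriv_succ_id_mul hh, smul_eq_mul, Nat.add_sub_cancel]
    push_cast
    ring

end Inversion

section JacobiTheta

variable {z τ : ℂ → ℂ} {U : Set ℂ}

lemma differentiableOn_jacobiTheta₂_comp (hz : DifferentiableOn ℂ z U)
    (hτ : DifferentiableOn ℂ τ U) (hτ_im : ∀ ν ∈ U, 0 < (τ ν).im) :
    DifferentiableOn ℂ (fun ν => jacobiTheta₂ (z ν) (τ ν)) U := fun ν hν =>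
  (hasFDerivAt_jacobiTheta₂ (z ν) (hτ_im ν hν)).differentiableAt.comp_differentiableWithinAt
    (f := fun ν => (z ν, τ ν)) ν ((hz ν hν).prodMk (hτ ν hν))

lemma differentiableOn_jacobiTheta₂'_comp (hU : IsOpen U) (hz : DifferentiableOn ℂ z U)
    (hτ : DifferentiableOn ℂ τ U) (hτ_im : ∀ ν ∈ U, 0 < (τ ν).im) :
    DifferentiableOn ℂ (fun ν => jacobiTheta₂' (z ν) (τ ν)) U := by
  intro ν₀ hν₀
  obtain ⟨T, hT, hTτ⟩ := exists_between (hτ_im ν₀ hν₀)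
  obtain ⟨S, hS⟩ := exists_gt |(z ν₀).im|
  let V : Set ℂ := (U ∩ {ν | |(z ν).im| < S}) ∩ (U ∩ {ν | T < (τ ν).im})
  have hV : IsOpen V :=
    ((continuous_abs.comp continuous_im).comp_continuousOn hz.continuousOn
      |>.isOpen_inter_preimage hU isOpen_Iio).inter
    (continuous_im.comp_continuousOn hτ.continuousOn |>.isOpen_inter_preimage hU isOpen_Ioi)
  have hVU : V ⊆ U := fun ν hν => hν.1.1
  have hterm (n : ℤ) : DifferentiableOn ℂ (fun ν => jacobiTheta₂'_term n (z ν) (τ ν)) V := by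
    have hzV := hz.mono hVU
    have hτV := hτ.mono hVU
    unfold jacobiTheta₂'_term jacobiTheta₂_term
    fun_prop
  have hsum := (summable_pow_mul_jacobiTheta₂_term_bound S hT 1).mul_left (2 * π)
  have hbound (n : ℤ) (ν : ℂ) (hν : ν ∈ V) := norm_jacobiTheta₂'_term_le hT hν.1.2.le hν.2.2.le n
  have hdiff : DifferentiableOn ℂ (fun ν => ∑' n : ℤ, jacobiTheta₂'_term n (z ν) (τ ν)) V :=
    differentiableOn_tsum_of_summable_norm hsum hterm hV
      (by simpa only [pow_one, Int.cast_abs, mul_assoc] using hbound)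
  exact (hdiff.differentiableAt (hV.mem_nhds ⟨⟨hν₀, hS⟩, hν₀, hTτ⟩)).differentiableWithinAt

end JacobiTheta

lemma re_one_div_pos {z : ℂ} (hz : 0 < z.re) : 0 < (1 / z).re := by
  rw [one_div, inv_re]
  exact div_pos hz (normSq_pos.mpr (ne_zero_of_re_pos hz))

section Theta

variable (p q : ℂ) {μ : ℂ}

/-- The exponential factor by which the theta function with characteristics `p`, `q` differs from
the characteristic-free `jacobiTheta₂ (q + I * p * μ) (I * μ)`; it is the `m = 0` summand of
`theta p q μ`. -/
def thetaPrefactor (p q μ : ℂ) : ℂ :=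
  cexp (-(π : ℂ) * p ^ 2 * μ + 2 * (π : ℂ) * I * p * q)

lemma cexp_eq_thetaPrefactor_mul_jacobiTheta₂_term (p q μ : ℂ) (m : ℤ) :
    cexp (-(π : ℂ) * ((m : ℂ) + p) ^ 2 * μ + 2 * (π : ℂ) * I * ((m : ℂ) + p) * q) =
      thetaPrefactor p q μ * jacobiTheta₂_term m (q + I * p * μ) (I * μ) := by
  rw [thetaPrefactor, jacobiTheta₂_term, ← Complex.exp_add]
  congr 1
  linear_combination (-(2 * π * m * p * μ) - π * m ^ 2 * μ : ℂ) * I_sq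

lemma theta_eq_jacobiTheta₂ (μ : ℂ) :
    theta p q μ = thetaPrefactor p q μ * jacobiTheta₂ (q + I * p * μ) (I * μ) := by
  simp only [theta, cexp_eq_thetaPrefactor_mul_jacobiTheta₂_term, tsum_mul_left, jacobiTheta₂]

lemma thetaQ_eq_jacobiTheta₂' (hμ : 0 < μ.re) :
    thetaQ p q μ = thetaPrefactor p q μ *
      (jacobiTheta₂' (q + I * p * μ) (I * μ) +
        2 * π * I * p * jacobiTheta₂ (q + I * p * μ) (I * μ)) := by
  have him : 0 < (I * μ).im := by rwa [I_mul_im]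
  have hsum := (hasSum_jacobiTheta₂'_term (q + I * p * μ) him).add
    ((hasSum_jacobiTheta₂_term (q + I * p * μ) him).mul_left (2 * π * I * p))
  rw [← hsum.tsum_eq, ← tsum_mul_left, thetaQ, ← tsum_mul_left]
  refine tsum_congr fun m => ?_
  rw [cexp_eq_thetaPrefactor_mul_jacobiTheta₂_term, jacobiTheta₂'_term]
  ring

lemma theta_add_one (μ : ℂ) : theta (p + 1) q μ = theta p q μ := by
  rw [theta, theta]
  refine (tsum_congr fun m => ?_).trans ((Equiv.addRight (1 : ℤ)).tsum_eq _)
  simp only [Equiv.coe_addRight, Int.cast_add, Int.cast_one, add_assoc, add_comm p]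

lemma thetaQ_add_one (μ : ℂ) : thetaQ (p + 1) q μ = thetaQ p q μ := by
  rw [thetaQ, thetaQ]
  congr 1
  refine (tsum_congr fun m => ?_).trans ((Equiv.addRight (1 : ℤ)).tsum_eq _)
  simp only [Equiv.coe_addRight, Int.cast_add, Int.cast_one, add_assoc, add_comm p]

lemma differentiableOn_theta : DifferentiableOn ℂ (theta p q) {ν | 0 < ν.re} := by
  have hjac : DifferentiableOn ℂ (fun ν => jacobiTheta₂ (q + I * p * ν) (I * ν)) {ν | 0 < ν.re} :=
    differentiableOn_jacobiTheta₂_comp (by fun_prop) (by fun_prop) fun ν hν => by rwa [I_mul_im]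
  rw [funext (theta_eq_jacobiTheta₂ p q)]
  unfold thetaPrefactor
  fun_prop

lemma differentiableOn_thetaQ : DifferentiableOn ℂ (thetaQ p q) {ν | 0 < ν.re} := by
  have hjac : DifferentiableOn ℂ (fun ν => jacobiTheta₂ (q + I * p * ν) (I * ν)) {ν | 0 < ν.re} :=
    differentiableOn_jacobiTheta₂_comp (by fun_prop) (by fun_prop) fun ν hν => by rwa [I_mul_im]
  have hjac' : DifferentiableOn ℂ (fun ν => jacobiTheta₂' (q + I * p * ν) (I * ν))
      {ν | 0 < ν.re} :=
    differentiableOn_jacobiTheta₂'_comp (isOpen_re_gt 0) (by fun_prop) (by fun_prop)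
      fun ν hν => by rwa [I_mul_im]
  refine DifferentiableOn.congr ?_ fun ν hν => thetaQ_eq_jacobiTheta₂' p q hν
  unfold thetaPrefactor
  fun_prop

lemma thetaPrefactor_one_div (hμ : μ ≠ 0) :
    thetaPrefactor p q (1 / μ) =
      cexp (2 * π * I * p * q) * thetaPrefactor (-q) p μ *
        cexp (-π * I * (p + I * -q * μ) ^ 2 / (I * μ)) := by
  rw [thetaPrefactor, thetaPrefactor, ← Complex.exp_add, ← Complex.exp_add]
  congr 1
  field_simp
  linear_combination (q ^ 2 * μ ^ 2) * I_sq

lemma add_I_mul_div_I_mul (hμ : μ ≠ 0) :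
    (p + I * -q * μ) / (I * μ) = -(q + I * p * (1 / μ)) := by
  field_simp
  linear_combination p * I_sq

lemma neg_one_div_I_mul (μ : ℂ) : -1 / (I * μ) = I * (1 / μ) := by
  rw [← div_div, div_I, neg_mul, neg_neg, one_mul, mul_one_div]

lemma neg_I_mul_I_mul (μ : ℂ) : -I * (I * μ) = μ := by
  linear_combination -μ * I_sq

lemma jacobiTheta₂_I_mul (hμ : μ ≠ 0) :
    jacobiTheta₂ (p + I * -q * μ) (I * μ) =
      1 / μ ^ (1 / 2 : ℂ) * cexp (-π * I * (p + I * -q * μ) ^ 2 / (I * μ)) *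
        jacobiTheta₂ (q + I * p * (1 / μ)) (I * (1 / μ)) := by
  rw [jacobiTheta₂_functional_equation, add_I_mul_div_I_mul p q hμ, neg_one_div_I_mul μ,
    jacobiTheta₂_neg_left, neg_I_mul_I_mul]

lemma jacobiTheta₂'_I_mul (hμ : μ ≠ 0) :
    jacobiTheta₂' (p + I * -q * μ) (I * μ) =
      1 / μ ^ (1 / 2 : ℂ) * cexp (-π * I * (p + I * -q * μ) ^ 2 / (I * μ)) / (I * μ) *
        (-jacobiTheta₂' (q + I * p * (1 / μ)) (I * (1 / μ)) -
          2 * π * I * (p + I * -q * μ) *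
            jacobiTheta₂ (q + I * p * (1 / μ)) (I * (1 / μ))) := by
  rw [jacobiTheta₂'_functional_equation, add_I_mul_div_I_mul p q hμ, neg_one_div_I_mul μ,
    jacobiTheta₂_neg_left, jacobiTheta₂'_neg_left, neg_I_mul_I_mul]

lemma theta_one_div (hμ : μ ≠ 0) :
    theta p q (1 / μ) = μ ^ (1 / 2 : ℂ) * cexp (2 * π * I * p * q) * theta (-q) p μ := by
  have hsqrt : μ ^ (1 / 2 : ℂ) ≠ 0 := by simp [cpow_eq_zero_iff, hμ]
  rw [theta_eq_jacobiTheta₂, theta_eq_jacobiTheta₂, jacobiTheta₂_I_mul p q hμ,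
    thetaPrefactor_one_div p q hμ]
  field_simp

lemma thetaQ_one_div (hμ : 0 < μ.re) :
    thetaQ p q (1 / μ) =
      -I * μ * (μ ^ (1 / 2 : ℂ) * cexp (2 * π * I * p * q)) * thetaQ (-q) p μ := by
  have hμ₀ : μ ≠ 0 := ne_zero_of_re_pos hμ
  have hsqrt : μ ^ (1 / 2 : ℂ) ≠ 0 := by simp [cpow_eq_zero_iff, hμ₀]
  rw [thetaQ_eq_jacobiTheta₂' p q (re_one_div_pos hμ), thetaQ_eq_jacobiTheta₂' (-q) p hμ,
    jacobiTheta₂_I_mul p q hμ₀, jacobiTheta₂'_I_mul p q hμ₀, thetaPrefactor_one_div p q hμ₀]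
  field_simp
  ring

lemma theta_zero_zero_one_div (hμ : μ ≠ 0) :
    theta 0 0 (1 / μ) = μ ^ (1 / 2 : ℂ) * theta 0 0 μ := by
  rw [theta_one_div 0 0 hμ, mul_zero, Complex.exp_zero, mul_one, neg_zero]

lemma theta_zero_half_one_div (hμ : μ ≠ 0) :
    theta 0 (1 / 2) (1 / μ) = μ ^ (1 / 2 : ℂ) * theta (1 / 2) 0 μ := by
  have htheta : theta (-(1 / 2)) 0 μ = theta (1 / 2) 0 μ := by
    rw [← theta_add_one]
    norm_num
  rw [theta_one_div 0 (1 / 2) hμ, htheta, mul_zero, zero_mul, Complex.exp_zero, mul_one]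

lemma thetaQ_add_half_one_div (hμ : 0 < μ.re) :
    thetaQ p (q + 1 / 2) (1 / μ) =
      -I * μ * (cexp (π * I * p) * (μ ^ (1 / 2 : ℂ) * cexp (2 * π * I * p * q))) *
        thetaQ (-q + 1 / 2) p μ := by
  have hthetaQ : thetaQ (-(q + 1 / 2)) p μ = thetaQ (-q + 1 / 2) p μ := by
    rw [← thetaQ_add_one]
    congr 1
    ring
  have hexp : cexp (2 * π * I * p * (q + 1 / 2)) =
      cexp (π * I * p) * cexp (2 * π * I * p * q) := by
    rw [← Complex.exp_add]
    congr 1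
    ring
  rw [thetaQ_one_div p (q + 1 / 2) hμ, hthetaQ, hexp]
  ring

end Theta

section TwoParametricFamily

variable (p q : ℂ) {μ : ℂ}

lemma w1_one_div (hμ : 0 < μ.re) : w1 p q (1 / μ) = μ ^ 2 * w3 (-q) p μ := by
  have hμ₀ : μ ≠ 0 := ne_zero_of_re_pos hμ
  have hsqrt_sq : μ ^ (1 / 2 : ℂ) * μ ^ (1 / 2 : ℂ) = μ := by
    rw [← cpow_add _ _ hμ₀, add_halves, cpow_one]
  set s := μ ^ (1 / 2 : ℂ) with s_def
  set c := cexp (π * I * p) * (s * cexp (2 * π * I * p * q)) with c_def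
  have hc : c ≠ 0 := by simp [c_def, s_def, hμ₀, cpow_eq_zero_iff]
  calc w1 p q (1 / μ)
      = -(I / 2) * (s * theta 0 0 μ) * (s * theta (1 / 2) 0 μ) *
          (-I * μ * c * thetaQ (-q + 1 / 2) p μ) / (c * theta (-q) p μ) := by
        rw [w1, theta_zero_zero_one_div hμ₀, theta_zero_half_one_div hμ₀,
          thetaQ_add_half_one_div p q hμ, theta_one_div p q hμ₀]
        simp only [c_def, s_def, mul_assoc]
    _ = c * (μ ^ 2 * (-(1 / 2) * theta (1 / 2) 0 μ * theta 0 0 μ *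
          thetaQ (-q + 1 / 2) p μ)) / (c * theta (-q) p μ) := by
        congr 1
        linear_combination
          c * μ * theta 0 0 μ * theta (1 / 2) 0 μ * thetaQ (-q + 1 / 2) p μ / 2 *
            (s ^ 2 * I_sq - hsqrt_sq)
    _ = μ ^ 2 * w3 (-q) p μ := by rw [mul_div_mul_left _ _ hc, w3, mul_div_assoc]

lemma analyticAt_w3 (hμ : 0 < μ.re) (hθ : theta p q μ ≠ 0) : AnalyticAt ℂ (w3 p q) μ := by
  have hnhds : {ν : ℂ | 0 < ν.re} ∈ 𝓝 μ := (isOpen_re_gt 0).mem_nhds hμ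
  have htheta (a b : ℂ) : AnalyticAt ℂ (theta a b) μ :=
    (differentiableOn_theta a b).analyticAt hnhds
  have hthetaQ : AnalyticAt ℂ (thetaQ (p + 1 / 2) q) μ :=
    (differentiableOn_thetaQ _ _).analyticAt hnhds
  unfold w3
  fun_prop (disch := assumption)

theorem statement6_general (n : ℕ) (hμ : 0 < μ.re) (hθ : theta p q (1 / μ) ≠ 0) :
    iteratedDeriv n (w1 p q) (1 / μ) = (-1) ^ n * μ ^ (n + 1) *
      ∑ i ∈ Finset.range (n + 1), n.choose i * ((n + 1).descFactorial i * μ ^ (n + 1 - i)) *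
        iteratedDeriv (n - i) (w3 (-q) p) μ := by
  have hμ₀ : μ ≠ 0 := ne_zero_of_re_pos hμ
  have hθ' : theta (-q) p μ ≠ 0 := right_ne_zero_of_mul (theta_one_div p q hμ₀ ▸ hθ)
  have hw3 : ContDiffAt ℂ n (w3 (-q) p) μ := (analyticAt_w3 (-q) p hμ hθ').contDiffAt
  have hw1 : ∀ᶠ ν in 𝓝 μ, w1 p q ν⁻¹ = ν ^ (1 + 1) * w3 (-q) p ν := by
    filter_upwards [(isOpen_re_gt 0).mem_nhds hμ] with ν hν
    rw [← one_div, w1_one_div p q hν]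
  rw [one_div, iteratedDeriv_of_comp_inv_eventuallyEq 1 hμ₀ hw3 hw1, iteratedDeriv_pow_mul _ hw3]

end TwoParametricFamily

/-- Lemma 5.6: behavior of `w₁[p,q]` and its μ-derivatives up to order 4 under
`iμ ↦ i/μ`, expressed through `w₃[−q,p]`. -/
theorem statement6 (p q μ : ℂ) (hμ : 0 < μ.re)
    (hθ : ∀ ν : ℂ, 0 < ν.re → theta p q ν ≠ 0) :
    w1 p q (1 / μ) = μ ^ 2 * w3 (-q) p μ ∧
    iteratedDeriv 1 (w1 p q) (1 / μ) =
        -μ ^ 4 * iteratedDeriv 1 (w3 (-q) p) μ - 2 * μ ^ 3 * w3 (-q) p μ ∧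
    iteratedDeriv 2 (w1 p q) (1 / μ) =
        μ ^ 6 * iteratedDeriv 2 (w3 (-q) p) μ + 6 * μ ^ 5 * iteratedDeriv 1 (w3 (-q) p) μ +
          6 * μ ^ 4 * w3 (-q) p μ ∧
    iteratedDeriv 3 (w1 p q) (1 / μ) =
        -μ ^ 8 * iteratedDeriv 3 (w3 (-q) p) μ - 12 * μ ^ 7 * iteratedDeriv 2 (w3 (-q) p) μ -
          36 * μ ^ 6 * iteratedDeriv 1 (w3 (-q) p) μ - 24 * μ ^ 5 * w3 (-q) p μ ∧
    iteratedDeriv 4 (w1 p q) (1 / μ) =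
        μ ^ 10 * iteratedDeriv 4 (w3 (-q) p) μ + 20 * μ ^ 9 * iteratedDeriv 3 (w3 (-q) p) μ +
          120 * μ ^ 8 * iteratedDeriv 2 (w3 (-q) p) μ +
          240 * μ ^ 7 * iteratedDeriv 1 (w3 (-q) p) μ + 120 * μ ^ 6 * w3 (-q) p μ := by
  have h (n : ℕ) := statement6_general p q n hμ (hθ _ (re_one_div_pos hμ))
  refine ⟨w1_one_div p q hμ, ?_, ?_, ?_, ?_⟩ <;>
  · rw [h]
    simp only [Finset.sum_range_succ, Finset.sum_range_zero, Nat.choose, Nat.descFactorial,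
      Nat.reduceAdd, Nat.reduceSub, Nat.reduceMul, iteratedDeriv_zero]
    push_cast
    ring

end
end
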